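/- Suppose ψ satisfies Assumption (P_{ρ1,ρ2,N}) and U satisfies Assumption (A_{μ1,μ2,N}), and fix q ∈ (p1,p2). Then for j = 1,2 there exists a function k̃_j ∈ C^N([0,s_j],ℂ) such that k̃_j(s) = U(φ_j^{-1}(s)) · s^{1-μ_j} · (φ_j^{-1})'(s) for every s ∈ (0,s_j]; that is, the function k_j defined on (0,s_j] by this formula extends to a C^N function on the closed interval [0,s_j]. -/

import Mathlib

/-!
Write `h₁ = g₁ - p1` and `h₂ = p2 - g₂`, so that `h_j` is `C^{N+1}` on `[0, s_j]` and vanishes at `0`.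
By Hadamard's lemma `h_j s = s * w_j s` with `w_j` of class `C^N` on `[0, s_j]`
(`exists_contDiffOn_div`), so the singular factor `h_j^{μ_j-1}` of `U ∘ g_j` combines with
`s^{1-μ_j}` to `w_j^{μ_j-1}`. This is `C^N` up to `s = 0` as soon as `w_j` does not vanish
(`exists_contDiffOn_amplitude`); the other factors, including `g_j'`, are visibly `C^N`, because
`g_j` stays away from the opposite endpoint.

Positivity of `w_j` is a lower bound `c * s ≤ h_j s`, i.e. an upper bound `φ_j(p) ≤ C |p - p_j|`.
It comes from the mean value theorem: `ψ' ≤ M |p - p_j|^{ρ_j-1}` gives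
`|ψ(p) - ψ(p_j)| ≤ M |p - p_j|^{ρ_j}` (`inverse_bounds`).

Hadamard's lemma on the closed interval is reduced to the whole line by extending `h_j` to a `C^{N+1}`
function on `ℝ` (`exists_contDiff_extension`), where `w s = ∫₀¹ h'(s t) dt` can be differentiated
under the integral sign (`contDiff_integral_pow_mul`).
-/

open Set Filter Topology MeasureTheory

/-! ### Hadamard's lemma on a closed interval -/

/-- A `C^n` function on `[0, b]` extends to a `C^n` function on `ℝ`: extend its derivative inductively
and integrate. -/
lemma exists_contDiff_extension (n : ℕ) : ∀ (f : ℝ → ℝ) (b : ℝ), 0 < b →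
    ContDiffOn ℝ n f (Icc 0 b) → ∃ F : ℝ → ℝ, ContDiff ℝ n F ∧ EqOn F f (Icc 0 b) := by
  induction n with
  | zero =>
    intro f b hb hf
    have hc : ContinuousOn f (Icc 0 b) := hf.continuousOn
    refine ⟨IccExtend hb.le ((Icc 0 b).domRestrict f), ?_, fun x hx => ?_⟩
    · exact contDiff_zero.2 ((continuousOn_iff_continuous_domRestrict.1 hc).Icc_extend')
    · rw [IccExtend_of_mem _ _ hx]; rfl
  | succ n ih =>
    intro f b hb hf
    have hu : UniqueDiffOn ℝ (Icc 0 b) := uniqueDiffOn_Icc hb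
    obtain ⟨G, hG, hGe⟩ := ih (derivWithin f (Icc 0 b)) b hb
      (hf.derivWithin hu (by push_cast; exact le_rfl))
    have hd : ∀ x, HasDerivAt (fun s => f 0 + ∫ t in (0 : ℝ)..s, G t) (G x) x := fun x =>
      (intervalIntegral.integral_hasDerivAt_right (hG.continuous.intervalIntegrable _ _)
        hG.continuous.stronglyMeasurable.stronglyMeasurableAtFilter
        hG.continuous.continuousAt).const_add _
    refine ⟨fun s => f 0 + ∫ t in (0 : ℝ)..s, G t, ?_, ?_⟩
    · push_cast
      refine contDiff_succ_iff_deriv.2 ⟨fun x => (hd x).differentiableAt, by simp, ?_⟩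
      rwa [show deriv (fun s => f 0 + ∫ t in (0 : ℝ)..s, G t) = G from funext fun x => (hd x).deriv]
    · refine eq_of_derivWithin_eq (fun x _ => (hd x).differentiableAt.differentiableWithinAt)
        (hf.differentiableOn (by simp)) (fun x hx => ?_) (by simp)
      have hx' := Ico_subset_Icc_self hx
      rw [(hd x).hasDerivWithinAt.derivWithin (hu x hx'), hGe hx']

/-- The weight `t ^ m` makes the induction on `n` go through: differentiating in `s` produces one more
factor `t`. -/
lemma contDiff_integral_pow_mul (n : ℕ) : ∀ (F : ℝ → ℝ) (m : ℕ), ContDiff ℝ n F →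
    ContDiff ℝ n (fun s => ∫ t in (0 : ℝ)..1, t ^ m * F (s * t)) := by
  induction n with
  | zero =>
    intro F m hF
    have hc : Continuous F := hF.continuous
    refine contDiff_zero.2 ?_
    exact intervalIntegral.continuous_parametric_intervalIntegral_of_continuous' (by fun_prop) _ _
  | succ n ih =>
    intro F m hF
    push_cast at hF
    obtain ⟨hdF, -, hF'⟩ := contDiff_succ_iff_deriv.1 hF
    have hc : Continuous F := hF.continuous
    have hc' : Continuous (deriv F) := hF'.continuous
    have hd : ∀ x, HasDerivAt (fun s => ∫ t in (0 : ℝ)..1, t ^ m * F (s * t))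
        (∫ t in (0 : ℝ)..1, t ^ (m + 1) * deriv F (x * t)) x := by
      intro x
      obtain ⟨C, hC⟩ := ((isCompact_closedBall x 1).prod isCompact_Icc
        (s := Metric.closedBall x 1) (t := Icc (0 : ℝ) 1)).exists_bound_of_continuousOn
        (f := fun z : ℝ × ℝ => z.2 ^ (m + 1) * deriv F (z.1 * z.2)) (by fun_prop)
      refine (intervalIntegral.hasDerivAt_integral_of_dominated_loc_of_deriv_le
        (F := fun s t => t ^ m * F (s * t)) (F' := fun s t => t ^ (m + 1) * deriv F (s * t))
        (bound := fun _ => C) (Metric.closedBall_mem_nhds x one_pos) ?_ ?_ ?_ ?_ ?_ ?_).2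
      · exact Eventually.of_forall fun s => Continuous.aestronglyMeasurable (by fun_prop)
      · exact Continuous.intervalIntegrable (by fun_prop) _ _
      · exact Continuous.aestronglyMeasurable (by fun_prop)
      · refine Eventually.of_forall fun t ht s hs => hC (s, t) ⟨hs, ?_⟩
        rw [uIoc_of_le zero_le_one] at ht
        exact Ioc_subset_Icc_self ht
      · exact intervalIntegrable_const
      · refine Eventually.of_forall fun t _ s _ => ?_
        have h1 : HasDerivAt (fun s : ℝ => s * t) t s := by
          simpa using (hasDerivAt_id s).mul_const t
        have h2 := ((hdF (s * t)).hasDerivAt.comp s h1).const_mul (t ^ m)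
        exact h2.congr_deriv (by ring)
    push_cast
    refine contDiff_succ_iff_deriv.2 ⟨fun x => (hd x).differentiableAt, by simp, ?_⟩
    rw [funext fun x => (hd x).deriv]
    exact ih _ _ hF'

/-- Hadamard's lemma on `[0, b]`: a `C^{n+1}` function vanishing at `0` is `s` times a `C^n` function. -/
lemma exists_contDiffOn_div (n : ℕ) (h : ℝ → ℝ) (b : ℝ) (hb : 0 < b)
    (hh : ContDiffOn ℝ (n + 1) h (Icc 0 b)) (h0 : h 0 = 0) :
    ∃ w : ℝ → ℝ, ContDiffOn ℝ n w (Icc 0 b) ∧ ∀ s ∈ Icc 0 b, h s = s * w s := by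
  obtain ⟨H, hH, hHe⟩ := exists_contDiff_extension (n + 1) h b hb (by exact_mod_cast hh)
  push_cast at hH
  obtain ⟨hdH, -, hH'⟩ := contDiff_succ_iff_deriv.1 hH
  refine ⟨fun s => ∫ t in (0 : ℝ)..1, t ^ 0 * deriv H (s * t),
    (contDiff_integral_pow_mul n _ 0 hH').contDiffOn, fun s hs => ?_⟩
  have hH0 : H 0 = 0 := by rw [hHe ⟨le_rfl, hb.le⟩, h0]
  have key : ∫ t in (0 : ℝ)..s, deriv H t = H s - H 0 :=
    intervalIntegral.integral_eq_sub_of_hasDerivAt (fun x _ => (hdH x).hasDerivAt)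
      (hH'.continuous.intervalIntegrable _ _)
  have := intervalIntegral.mul_integral_comp_mul_left (a := 0) (b := 1) (f := deriv H) s
  simp only [pow_zero, one_mul]
  rw [this, mul_zero, mul_one, key, hH0, sub_zero, hHe hs]

/-! ### The regularized amplitude -/

/-- If `h` vanishes exactly to first order at `0`, the singularity of `h^{μ-1}` is compensated by
`s^{1-μ}`. -/
lemma exists_contDiffOn_amplitude (n : ℕ) (h : ℝ → ℝ) (b c μ : ℝ) (v : ℝ → ℂ) (hb : 0 < b)
    (hh : ContDiffOn ℝ (n + 1) h (Icc 0 b)) (h0 : h 0 = 0) (hc : 0 < c)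
    (hch : ∀ s ∈ Icc 0 b, c * s ≤ h s) (hv : ContDiffOn ℝ n v (Icc 0 b)) :
    ∃ k : ℝ → ℂ, ContDiffOn ℝ n k (Icc 0 b) ∧ ∀ s ∈ Ioc 0 b,
      k s = (((h s) ^ (μ - 1) : ℝ) : ℂ) * ((s ^ (1 - μ) : ℝ) : ℂ) * v s := by
  obtain ⟨w, hw, hws⟩ := exists_contDiffOn_div n h b hb hh h0
  have hwc' : ∀ s ∈ Ioc 0 b, c ≤ w s := fun s hs => by
    have h1 := hch s (Ioc_subset_Icc_self hs)
    rw [hws s (Ioc_subset_Icc_self hs), mul_comm] at h1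
    exact le_of_mul_le_mul_left h1 hs.1
  -- The bound passes to `s = 0` by continuity.
  have hwc : ∀ s ∈ Icc 0 b, c ≤ w s := fun s hs => by
    have hcl : closure (Ioc 0 b) = Icc 0 b := closure_Ioc hb.ne
    rw [← hcl] at hs
    exact ContinuousWithinAt.closure_le hs continuousWithinAt_const
      ((hw.continuousOn s (hcl ▸ hs)).mono Ioc_subset_Icc_self) hwc'
  refine ⟨fun s => (((w s) ^ (μ - 1) : ℝ) : ℂ) * v s, ?_, fun s hs => ?_⟩
  · exact (Complex.ofRealCLM.contDiff.comp_contDiffOn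
      (hw.rpow_const_of_ne fun s hs => (hc.trans_le (hwc s hs)).ne')).mul hv
  · have hw0 := hc.trans_le (hwc' s hs)
    rw [hws s (Ioc_subset_Icc_self hs), Real.mul_rpow hs.1.le hw0.le, ← Complex.ofReal_mul]
    rw [mul_right_comm, ← Real.rpow_add hs.1]
    simp

/-! ### Linear lower bound for the inverse diffeomorphism -/

/-- `χ` stands for `|ψ - ψ(p_j)|` as a function of the distance to the endpoint `p_j`, and `G` for
`|g_j - p_j|`. The hypothesis on `G` only says that it is a two-sided inverse; that it maps into
`[0, L]` follows from surjectivity of `χ^{1/ρ}` onto `[0, χ(L)^{1/ρ}]`. -/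
lemma inverse_bounds (χ χ' G : ℝ → ℝ) (L ρ M : ℝ) (hL : 0 < L) (hρ : 1 ≤ ρ)
    (hχ : ContinuousOn χ (Icc 0 L)) (hχ0 : χ 0 = 0)
    (hd : ∀ x ∈ Ioo 0 L, HasDerivAt χ (χ' x) x) (hpos : ∀ x ∈ Ioo 0 L, 0 < χ' x)
    (hM : ∀ x ∈ Ioo 0 L, χ' x ≤ M * x ^ (ρ - 1))
    (hG : InvOn G (fun x => χ x ^ (1 / ρ)) (Icc 0 L) (Icc 0 (χ L ^ (1 / ρ)))) :
    0 < χ L ^ (1 / ρ) ∧ G 0 = 0 ∧ (∀ s ∈ Icc 0 (χ L ^ (1 / ρ)), G s ∈ Icc 0 L) ∧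
      ∃ c, 0 < c ∧ ∀ s ∈ Icc 0 (χ L ^ (1 / ρ)), c * s ≤ G s := by
  have hρ0 : 0 < ρ := by linarith
  have hmvt : ∀ x ∈ Ioc 0 L, ∃ y ∈ Ioo 0 x, χ x = χ' y * x := fun x hx => by
    obtain ⟨y, hy, hy'⟩ := exists_hasDerivAt_eq_slope χ χ' hx.1
      (hχ.mono (Icc_subset_Icc_right hx.2)) fun y hy => hd y ⟨hy.1, hy.2.trans_le hx.2⟩
    refine ⟨y, hy, ?_⟩
    rw [hy', hχ0, sub_zero, sub_zero, div_mul_cancel₀ _ hx.1.ne']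
  have hχpos : ∀ x ∈ Ioc 0 L, 0 < χ x := fun x hx => by
    obtain ⟨y, hy, e⟩ := hmvt x hx
    rw [e]; exact mul_pos (hpos y ⟨hy.1, hy.2.trans_le hx.2⟩) hx.1
  have hM0 : 0 < M := by
    have hx : L / 2 ∈ Ioo 0 L := ⟨by linarith, by linarith⟩
    exact pos_of_mul_pos_left ((hpos _ hx).trans_le (hM _ hx)) (Real.rpow_nonneg hx.1.le _)
  have hχle : ∀ x ∈ Ioc 0 L, χ x ≤ M * x ^ ρ := fun x hx => by
    obtain ⟨y, hy, e⟩ := hmvt x hx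
    calc χ x = χ' y * x := e
      _ ≤ M * y ^ (ρ - 1) * x :=
        mul_le_mul_of_nonneg_right (hM y ⟨hy.1, hy.2.trans_le hx.2⟩) hx.1.le
      _ ≤ M * x ^ (ρ - 1) * x := by
        have := Real.rpow_le_rpow hy.1.le hy.2.le (by linarith : 0 ≤ ρ - 1)
        have := hx.1.le
        gcongr
      _ = M * x ^ ρ := by
        rw [mul_assoc, ← Real.rpow_add_one hx.1.ne', sub_add_cancel]
  have hzero : (χ 0) ^ (1 / ρ) = 0 := by
    rw [hχ0, Real.zero_rpow (by positivity)]
  have hφc : ContinuousOn (fun x => χ x ^ (1 / ρ)) (Icc 0 L) :=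
    hχ.rpow_const fun x _ => Or.inr (by positivity)
  have hsurj : ∀ s ∈ Icc 0 (χ L ^ (1 / ρ)), ∃ x ∈ Icc 0 L, χ x ^ (1 / ρ) = s := fun s hs => by
    have := intermediate_value_Icc hL.le hφc
    simp only [hzero] at this
    exact this hs
  have hGmem : ∀ s ∈ Icc 0 (χ L ^ (1 / ρ)), G s ∈ Icc 0 L := fun s hs => by
    obtain ⟨x, hx, rfl⟩ := hsurj s hs
    have := hG.1 hx
    simp only at this
    rwa [this]
  refine ⟨Real.rpow_pos_of_pos (hχpos L ⟨hL, le_rfl⟩) _, ?_, hGmem, (M ^ (1 / ρ))⁻¹,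
    by positivity, fun s hs => ?_⟩
  · have := hG.1 (show (0 : ℝ) ∈ Icc 0 L from ⟨le_rfl, hL.le⟩)
    simpa only [hzero] using this
  · obtain ⟨x, hx, rfl⟩ := hsurj s hs
    have e := hG.1 hx
    simp only at e
    rw [e, inv_mul_le_iff₀ (by positivity)]
    rcases hx.1.eq_or_lt with rfl | h0
    · rw [hzero, mul_zero]
    · calc χ x ^ (1 / ρ) ≤ (M * x ^ ρ) ^ (1 / ρ) :=
          Real.rpow_le_rpow (hχpos x ⟨h0, hx.2⟩).le (hχle x ⟨h0, hx.2⟩) (by positivity)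
        _ = M ^ (1 / ρ) * x := by
          rw [Real.mul_rpow hM0.le (by positivity), ← Real.rpow_mul h0.le,
            mul_one_div_cancel hρ0.ne', Real.rpow_one]

/-! ### Both endpoints -/

/-- under Assumptions (P_{ρ1,ρ2,N}) and (A_{μ1,μ2,N}), with q ∈ (p1,p2),
for j = 1,2 the function k_j(s) = U(φ_j⁻¹(s))·s^{1-μ_j}·(φ_j⁻¹)'(s), defined on (0,s_j],
extends to a C^N function on [0,s_j].  Here the inverse diffeomorphism φ_j⁻¹ is
represented by a function g_j which is a C^{N+1} inverse of φ_j. -/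
theorem stmt_2 (p1 p2 : ℝ) (hp : p1 < p2) (N : ℕ) (hN : 1 ≤ N) (ρ1 ρ2 μ1 μ2 : ℝ)
    (hρ1 : 1 ≤ ρ1) (hρ2 : 1 ≤ ρ2)
    (hμ1 : 0 < μ1) (hμ1' : μ1 ≤ 1) (hμ2 : 0 < μ2) (hμ2' : μ2 ≤ 1)
    (ψ ψt : ℝ → ℝ)
    (hψ : ContDiffOn ℝ 1 ψ (Set.Icc p1 p2))
    (hψd : ∀ p ∈ Set.Icc p1 p2, derivWithin ψ (Set.Icc p1 p2) p
      = (p - p1) ^ (ρ1 - 1) * (p2 - p) ^ (ρ2 - 1) * ψt p)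
    (hψt : ContDiffOn ℝ N ψt (Set.Icc p1 p2))
    (hψtpos : ∀ p ∈ Set.Icc p1 p2, 0 < ψt p)
    (ut : ℝ → ℂ) (hut : ContDiffOn ℝ N ut (Set.Icc p1 p2))
    (hut1 : μ1 ≠ 1 → ut p1 ≠ 0) (hut2 : μ2 ≠ 1 → ut p2 ≠ 0)
    (U : ℝ → ℂ)
    (hU : ∀ p ∈ Set.Ioo p1 p2,
      U p = (((p - p1) ^ (μ1 - 1) : ℝ) : ℂ) * (((p2 - p) ^ (μ2 - 1) : ℝ) : ℂ) * ut p)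
    (q : ℝ) (hq : q ∈ Set.Ioo p1 p2)
    (g1 g2 : ℝ → ℝ)
    (hg1 : Set.InvOn g1 (fun p => (ψ p - ψ p1) ^ (1 / ρ1)) (Set.Icc p1 q)
        (Set.Icc 0 ((ψ q - ψ p1) ^ (1 / ρ1))))
    (hg1' : ContDiffOn ℝ (N + 1) g1 (Set.Icc 0 ((ψ q - ψ p1) ^ (1 / ρ1))))
    (hg2 : Set.InvOn g2 (fun p => (ψ p2 - ψ p) ^ (1 / ρ2)) (Set.Icc q p2)
        (Set.Icc 0 ((ψ p2 - ψ q) ^ (1 / ρ2))))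
    (hg2' : ContDiffOn ℝ (N + 1) g2 (Set.Icc 0 ((ψ p2 - ψ q) ^ (1 / ρ2)))) :
    (∃ k : ℝ → ℂ, ContDiffOn ℝ N k (Set.Icc 0 ((ψ q - ψ p1) ^ (1 / ρ1))) ∧
      ∀ s ∈ Set.Ioc 0 ((ψ q - ψ p1) ^ (1 / ρ1)),
        k s = U (g1 s) * ((s ^ (1 - μ1) : ℝ) : ℂ)
            * ((derivWithin g1 (Set.Icc 0 ((ψ q - ψ p1) ^ (1 / ρ1))) s : ℝ) : ℂ)) ∧
    (∃ k : ℝ → ℂ, ContDiffOn ℝ N k (Set.Icc 0 ((ψ p2 - ψ q) ^ (1 / ρ2))) ∧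
      ∀ s ∈ Set.Ioc 0 ((ψ p2 - ψ q) ^ (1 / ρ2)),
        k s = U (g2 s) * ((s ^ (1 - μ2) : ℝ) : ℂ)
            * ((derivWithin g2 (Set.Icc 0 ((ψ p2 - ψ q) ^ (1 / ρ2))) s : ℝ) : ℂ)) := by
  have hder : ∀ p ∈ Ioo p1 p2,
      HasDerivAt ψ ((p - p1) ^ (ρ1 - 1) * (p2 - p) ^ (ρ2 - 1) * ψt p) p := fun p hpI => by
    have h := (hψ.differentiableOn (by simp) p (Ioo_subset_Icc_self hpI)).hasDerivWithinAt
    rw [hψd p (Ioo_subset_Icc_self hpI)] at h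
    exact h.hasDerivAt (Icc_mem_nhds hpI.1 hpI.2)
  have hderpos : ∀ p ∈ Ioo p1 p2,
      0 < (p - p1) ^ (ρ1 - 1) * (p2 - p) ^ (ρ2 - 1) * ψt p := fun p hpI =>
    mul_pos (mul_pos (Real.rpow_pos_of_pos (sub_pos.2 hpI.1) _)
      (Real.rpow_pos_of_pos (sub_pos.2 hpI.2) _)) (hψtpos p (Ioo_subset_Icc_self hpI))
  -- Each bound leaves out the power that vanishes at the endpoint under consideration.
  obtain ⟨M1, hM1⟩ := isCompact_Icc.exists_bound_of_continuousOn
    (f := fun p => (p2 - p) ^ (ρ2 - 1) * ψt p) (s := Icc p1 p2)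
    (((continuousOn_const.sub continuousOn_id).rpow_const
      fun p _ => Or.inr (by linarith)).mul hψt.continuousOn)
  obtain ⟨M2, hM2⟩ := isCompact_Icc.exists_bound_of_continuousOn
    (f := fun p => (p - p1) ^ (ρ1 - 1) * ψt p) (s := Icc p1 p2)
    (((continuousOn_id.sub continuousOn_const).rpow_const
      fun p _ => Or.inr (by linarith)).mul hψt.continuousOn)
  have hNN : (N : WithTop ℕ∞) ≤ N + 1 := le_self_add
  constructor
  · obtain ⟨hs0, hG0, hGm, c, hc, hcG⟩ := inverse_bounds (fun x => ψ (p1 + x) - ψ p1)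
      (fun x => (p1 + x - p1) ^ (ρ1 - 1) * (p2 - (p1 + x)) ^ (ρ2 - 1) * ψt (p1 + x))
      (fun s => g1 s - p1) (q - p1) ρ1 M1 (sub_pos.2 hq.1) hρ1
      ((hψ.continuousOn.comp (by fun_prop) fun x hx =>
        ⟨by linarith [hx.1], by linarith [hx.2, hq.2]⟩).sub continuousOn_const)
      (by simp)
      (fun x hx => ((hder (p1 + x) ⟨by linarith [hx.1], by linarith [hx.2, hq.2]⟩).comp_const_add
        p1 x).sub_const _)
      (fun x hx => hderpos _ ⟨by linarith [hx.1], by linarith [hx.2, hq.2]⟩)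
      (fun x hx => by
        have h := (le_abs_self _).trans
          (hM1 (p1 + x) ⟨by linarith [hx.1], by linarith [hx.2, hq.2]⟩)
        have h0 := Real.rpow_nonneg hx.1.le (ρ1 - 1)
        simp only [add_sub_cancel_left]
        rw [mul_assoc, mul_comm M1]
        exact mul_le_mul_of_nonneg_left h h0)
      (by
        simp only [add_sub_cancel]
        refine ⟨fun x hx => ?_, fun s hs => ?_⟩
        · have := hg1.1 (show p1 + x ∈ Icc p1 q from ⟨by linarith [hx.1], by linarith [hx.2]⟩)
          simp only at this ⊢
          rw [this]; ring
        · have := hg1.2 hs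
          simpa only [add_sub_cancel] using this)
    simp only [add_sub_cancel] at hs0 hGm hcG
    have hmem : ∀ s ∈ Icc 0 ((ψ q - ψ p1) ^ (1 / ρ1)), g1 s ∈ Icc p1 q := fun s hs =>
      ⟨by linarith [(hGm s hs).1], by linarith [(hGm s hs).2]⟩
    have hgN := hg1'.of_le hNN
    have hlt : ∀ s ∈ Icc 0 ((ψ q - ψ p1) ^ (1 / ρ1)), 0 < p2 - g1 s := fun s hs => by
      linarith [(hmem s hs).2, hq.2]
    obtain ⟨k, hk, hks⟩ := exists_contDiffOn_amplitude N (fun s => g1 s - p1) _ c μ1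
      (fun s => (((p2 - g1 s) ^ (μ2 - 1) : ℝ) : ℂ) * ut (g1 s) *
        ((derivWithin g1 (Icc 0 ((ψ q - ψ p1) ^ (1 / ρ1))) s : ℝ) : ℂ)) hs0
      (hg1'.sub contDiffOn_const) hG0 hc hcG
      (((Complex.ofRealCLM.contDiff.comp_contDiffOn
        ((contDiffOn_const.sub hgN).rpow_const_of_ne fun s hs => (hlt s hs).ne')).mul
        (hut.comp hgN fun s hs => ⟨(hmem s hs).1, by linarith [hlt s hs]⟩)).mul
        (Complex.ofRealCLM.contDiff.comp_contDiffOn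
          (hg1'.derivWithin (uniqueDiffOn_Icc hs0) le_rfl)))
    refine ⟨k, hk, fun s hs => ?_⟩
    have hs' := Ioc_subset_Icc_self hs
    rw [hks s hs, hU (g1 s) ⟨by linarith [hcG s hs', mul_pos hc hs.1], by linarith [hlt s hs']⟩]
    ring
  · obtain ⟨hs0, hG0, hGm, c, hc, hcG⟩ := inverse_bounds (fun x => ψ p2 - ψ (p2 - x))
      (fun x => (p2 - x - p1) ^ (ρ1 - 1) * (p2 - (p2 - x)) ^ (ρ2 - 1) * ψt (p2 - x))
      (fun s => p2 - g2 s) (p2 - q) ρ2 M2 (sub_pos.2 hq.2) hρ2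
      (continuousOn_const.sub (hψ.continuousOn.comp (by fun_prop) fun x hx =>
        ⟨by linarith [hx.2, hq.1], by linarith [hx.1]⟩))
      (by simp)
      (fun x hx => by
        have h := ((hder (p2 - x) ⟨by linarith [hx.2, hq.1],
          by linarith [hx.1]⟩).comp_const_sub p2 x).const_sub (ψ p2)
        rwa [neg_neg] at h)
      (fun x hx => hderpos _ ⟨by linarith [hx.2, hq.1], by linarith [hx.1]⟩)
      (fun x hx => by
        have h := (le_abs_self _).trans
          (hM2 (p2 - x) ⟨by linarith [hx.2, hq.1], by linarith [hx.1]⟩)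
        have h0 := Real.rpow_nonneg hx.1.le (ρ2 - 1)
        simp only [sub_sub_cancel]
        rw [mul_right_comm]
        exact mul_le_mul_of_nonneg_right h h0)
      (by
        simp only [sub_sub_cancel]
        refine ⟨fun x hx => ?_, fun s hs => ?_⟩
        · have := hg2.1 (show p2 - x ∈ Icc q p2 from ⟨by linarith [hx.2], by linarith [hx.1]⟩)
          simp only at this ⊢
          rw [this]; ring
        · have := hg2.2 hs
          simpa only [sub_sub_cancel] using this)
    simp only [sub_sub_cancel] at hs0 hGm hcG
    have hmem : ∀ s ∈ Icc 0 ((ψ p2 - ψ q) ^ (1 / ρ2)), g2 s ∈ Icc q p2 := fun s hs =>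
      ⟨by linarith [(hGm s hs).2], by linarith [(hGm s hs).1]⟩
    have hgN := hg2'.of_le hNN
    have hlt : ∀ s ∈ Icc 0 ((ψ p2 - ψ q) ^ (1 / ρ2)), 0 < g2 s - p1 := fun s hs => by
      linarith [(hmem s hs).1, hq.1]
    obtain ⟨k, hk, hks⟩ := exists_contDiffOn_amplitude N (fun s => p2 - g2 s) _ c μ2
      (fun s => (((g2 s - p1) ^ (μ1 - 1) : ℝ) : ℂ) * ut (g2 s) *
        ((derivWithin g2 (Icc 0 ((ψ p2 - ψ q) ^ (1 / ρ2))) s : ℝ) : ℂ)) hs0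
      (contDiffOn_const.sub hg2') hG0 hc hcG
      (((Complex.ofRealCLM.contDiff.comp_contDiffOn
        ((hgN.sub contDiffOn_const).rpow_const_of_ne fun s hs => (hlt s hs).ne')).mul
        (hut.comp hgN fun s hs => ⟨by linarith [hlt s hs], (hmem s hs).2⟩)).mul
        (Complex.ofRealCLM.contDiff.comp_contDiffOn
          (hg2'.derivWithin (uniqueDiffOn_Icc hs0) le_rfl)))
    refine ⟨k, hk, fun s hs => ?_⟩
    have hs' := Ioc_subset_Icc_self hs
    rw [hks s hs, hU (g2 s) ⟨by linarith [hlt s hs'], by linarith [hcG s hs', mul_pos hc hs.1]⟩]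
    ring
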